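/- Let N, M ≥ 1 be integers and T > 0. Suppose φ : [0,T) → ℂ³, a_j : [0,T) → ℂ, s_j : [0,T) → ℂ³ (j = 1,…,N) and b_j : [0,T) → ℂ, t_j : [0,T) → ℂ³ (j = 1,…,M) are differentiable, satisfy a_j − a_k ∉ Λ and b_j − b_k ∉ Λ for j ≠ k and a_j − b_k + iδ ∉ Λ for all j, k on [0,T), solve on [0,T) the first-order system: ṡ_j = −2Σ_{k≠j} (s_j∧s_k) ℘₂(a_j−a_k); ṫ_j = −2Σ_{k≠j} (t_j∧t_k) ℘₂(b_j−b_k); s_j ȧ_j = −s_j∧(iφ − Σ_{k≠j} s_k ζ₂(a_j−a_k) + Σ_{k=1}^{M} t_k ζ₂(a_j−b_k+iδ)); t_j ḃ_j = +t_j∧(iφ + Σ_{k≠j} t_k ζ₂(b_j−b_k) − Σ_{k=1}^{N} s_k ζ₂(b_j−a_k+iδ)); φ̇ = (i/2)Σ_{j=1}^{N}Σ_{k≠j} (s_j∧s_k) f₂′(a_j−a_k) − (i/2)Σ_{j=1}^{M}Σ_{k≠j} (t_j∧t_k) f₂′(b_j−b_k), and satisfy Σ_{j=1}^{N} s_j(0)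 − Σ_{j=1}^{M} t_j(0) = 0 and s_j(0)² = 0 (j ≤ N), t_j(0)² = 0 (j ≤ M). Then the quantity R(t) = φ² − (1/2)Σ_{j=1}^{N}Σ_{k≠j} s_j·s_k f₂(a_j−a_k) − (1/2)Σ_{j=1}^{M}Σ_{k≠j} t_j·t_k f₂(b_j−b_k) + Σ_{j=1}^{N}Σ_{k=1}^{M} s_j·t_k f₂(a_j−b_k+iδ) is constant on [0,T). -/

import Mathlib

open Complex Filter MeasureTheory Finset

noncomputable section

/-- The period lattice with half-periods `ℓ` and `iδ`. -/
def Lambda (ℓ δ : ℝ) : Set ℂ :=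
  {z | ∃ n m : ℤ, z = 2 * (n : ℂ) * (ℓ : ℂ) + 2 * (m : ℂ) * ((δ : ℂ) * Complex.I)}

/-- The nonzero lattice points. -/
def latticePts (ℓ δ : ℝ) : Set ℂ := Lambda ℓ δ \ {0}

/-- Weierstrass ℘-function with half-periods `ℓ`, `iδ`. -/
def wP (ℓ δ : ℝ) (z : ℂ) : ℂ :=
  1 / z ^ 2 + ∑' ω : latticePts ℓ δ, (1 / (z - (ω : ℂ)) ^ 2 - 1 / (ω : ℂ) ^ 2)

/-- Weierstrass ζ-function with half-periods `ℓ`, `iδ`. -/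
def wZeta (ℓ δ : ℝ) (z : ℂ) : ℂ :=
  1 / z + ∑' ω : latticePts ℓ δ, (1 / (z - (ω : ℂ)) + 1 / (ω : ℂ) + z / (ω : ℂ) ^ 2)

def zeta2 (ℓ δ : ℝ) (z : ℂ) : ℂ :=
  wZeta ℓ δ z - (wZeta ℓ δ ((δ : ℂ) * Complex.I) / ((δ : ℂ) * Complex.I)) * z

def wp2 (ℓ δ : ℝ) (z : ℂ) : ℂ :=
  wP ℓ δ z + wZeta ℓ δ ((δ : ℂ) * Complex.I) / ((δ : ℂ) * Complex.I)

def f2 (ℓ δ : ℝ) (z : ℂ) : ℂ := (zeta2 ℓ δ z) ^ 2 - wp2 ℓ δ z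

def zeta1 (ℓ δ : ℝ) (z : ℂ) : ℂ :=
  wZeta ℓ δ z - (wZeta ℓ δ (ℓ : ℂ) / (ℓ : ℂ)) * z

/-- Bilinear dot product on `ℂ³` (no conjugation). -/
def dot3 (s t : Fin 3 → ℂ) : ℂ := s 0 * t 0 + s 1 * t 1 + s 2 * t 2

/-- Cross product on `ℂ³`. -/
def cross3 (s t : Fin 3 → ℂ) : Fin 3 → ℂ :=
  ![s 1 * t 2 - s 2 * t 1, s 2 * t 0 - s 0 * t 2, s 0 * t 1 - s 1 * t 0]

/-- The principal-value integral operator `T`. -/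
def pvT (ℓ δ : ℝ) (f : ℝ → Fin 3 → ℂ) (x : ℝ) : Fin 3 → ℂ := fun i =>
  (1 / (Real.pi : ℂ)) * limUnder (nhdsWithin (0 : ℝ) (Set.Ioi 0)) (fun ε : ℝ =>
    ∫ y in {y : ℝ | y ∈ Set.Icc (-ℓ) ℓ ∧ ε ≤ |y - x|},
      zeta1 ℓ δ ((y : ℂ) - (x : ℂ)) * f y i)

/-- The integral operator `T̃`. -/
def tilT (ℓ δ : ℝ) (f : ℝ → Fin 3 → ℂ) (x : ℝ) : Fin 3 → ℂ := fun i =>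
  (1 / (Real.pi : ℂ)) * ∫ y in Set.Icc (-ℓ) ℓ,
      zeta1 ℓ δ ((y : ℂ) - (x : ℂ) + (δ : ℂ) * Complex.I) * f y i

/-!
Shift the second species by `-iδ` and reverse its spins. Since `ζ₂` has period `2iδ`, the two
species then form one family of poles with charges `±1` and pair interactions `ζ₂`, `℘₂`, `f₂`,
and `R` is the energy of this family. The total spin is conserved, hence stays zero. The
derivative of the energy is a sum over triples of poles of the triple products `s_j · (s_l ∧ s_k)`
with coefficients `℘₂(x_j - x_l) (f₂(x_j - x_k) - f₂(x_l - x_k)) - ζ₂(x_j - x_l) f₂'(x_j - x_k)`.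
Skew-symmetrized in `l` and `k`, such a coefficient is a difference of two functions that depend
on one of the two indices only, so that zero total spin makes the sum vanish. This functional
equation is a form of the addition theorem `(ζ(x) + ζ(y) + ζ(z))² = ℘(x) + ℘(y) + ℘(z)` for
`x + y + z = 0`, which follows from Liouville's theorem.
-/

section WeierstrassZeta

open PeriodPair Topology

variable (L : PeriodPair)

/-- The term of the Weierstrass `ζ`-series belonging to the period `l`. The pole at the origin is
treated separately, so the term of `l = 0` is set to `0`. -/
def weierstrassZetaSummand (l z : ℂ) : ℂ :=
  if l = 0 then 0 else 1 / (z - l) + 1 / l + z / l ^ 2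

/-- The part of the Weierstrass `ζ`-function of the lattice of `L` that is regular at `0`. -/
def weierstrassZetaReg (z : ℂ) : ℂ := ∑' l : L.lattice, weierstrassZetaSummand l z

/-- The Weierstrass `ζ`-function of the lattice of `L`; Mathlib only has `℘[L]`. -/
def weierstrassZeta (z : ℂ) : ℂ := 1 / z + weierstrassZetaReg L z

lemma norm_weierstrassZetaSummand_le {r : ℝ} (hr : 0 < r) {z l : ℂ} (hz : ‖z‖ < r)
    (hl : 2 * r ≤ ‖l‖) : ‖weierstrassZetaSummand l z‖ ≤ 2 * r ^ 2 * ‖l‖ ^ (-3 : ℝ) := by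
  have hl_pos : 0 < ‖l‖ := by linarith
  have hl_ne : l ≠ 0 := norm_pos_iff.mp hl_pos
  have hzl : z - l ≠ 0 := sub_ne_zero.mpr (by rintro rfl; linarith)
  have hdist : ‖l‖ / 2 ≤ ‖z - l‖ := by
    rw [norm_sub_rev]
    exact .trans (by linarith) (norm_sub_norm_le l z)
  have hsingle : weierstrassZetaSummand l z = z ^ 2 / (l ^ 2 * (z - l)) := by
    rw [weierstrassZetaSummand, if_neg hl_ne]
    field_simp
    ring
  calc ‖weierstrassZetaSummand l z‖ = ‖z‖ ^ 2 / (‖l‖ ^ 2 * ‖z - l‖) := by simp [hsingle]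
    _ ≤ r ^ 2 / (‖l‖ ^ 2 * (‖l‖ / 2)) := by gcongr
    _ = 2 * r ^ 2 / ‖l‖ ^ 3 := by field_simp
    _ = 2 * r ^ 2 * ‖l‖ ^ (-3 : ℝ) := by norm_cast

lemma hasSumLocallyUniformly_weierstrassZetaReg :
    HasSumLocallyUniformly (fun (l : L.lattice) z ↦ weierstrassZetaSummand l z)
      (weierstrassZetaReg L) := by
  refine L.hasSumLocallyUniformly_aux (u := fun r l ↦ 2 * r ^ 2 * ‖l‖ ^ (-3 : ℝ)) _
    (fun _ _ ↦ (ZLattice.summable_norm_rpow _ _ (by simp; norm_num)).mul_left _) fun r hr ↦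
    eventually_atTop.mpr ⟨2 * r, ?_⟩
  rintro _ hl z hz l rfl
  exact norm_weierstrassZetaSummand_le hr hz hl

lemma hasDerivAt_weierstrassZetaSummand {l z : ℂ} (hz : l = 0 ∨ z ≠ l) :
    HasDerivAt (weierstrassZetaSummand l)
      (-(if l = 0 then 0 else 1 / (z - l) ^ 2 - 1 / l ^ 2)) z := by
  unfold weierstrassZetaSummand
  split_ifs with hl
  · simpa using hasDerivAt_const z (0 : ℂ)
  · have hzl : z - l ≠ 0 := sub_ne_zero.mpr (hz.resolve_left hl)
    refine (((((hasDerivAt_id z).sub_const l).inv hzl).add_const (1 / l)).add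
      ((hasDerivAt_id z).div_const (l ^ 2))).congr_deriv ?_ |>.congr_of_eventuallyEq
      (.of_forall fun w ↦ by simp)
    simp only [id]
    ring

lemma hasDerivAt_weierstrassZetaReg {z : ℂ} (hz : z ∈ ((L.lattice : Set ℂ) \ {0})ᶜ) :
    HasDerivAt (weierstrassZetaReg L) (-L.weierstrassPExcept 0 z) z := by
  refine hasDerivAt_of_tendstoLocallyUniformlyOn L.isOpen_compl_lattice_sdiff
    (L.hasSumLocallyUniformly_weierstrassPExcept 0).tendstoLocallyUniformlyOn.neg
    (.of_forall fun s w hw ↦ ?_)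
    (fun w _ ↦ (hasSumLocallyUniformly_weierstrassZetaReg L).hasSum) hz
  simp only [Pi.neg_apply, ← Finset.sum_neg_distrib]
  refine .fun_sum fun l _ ↦ hasDerivAt_weierstrassZetaSummand (or_iff_not_imp_left.mpr ?_)
  rintro hl rfl
  exact hw ⟨l.2, hl⟩

lemma weierstrassZetaReg_neg (z : ℂ) : weierstrassZetaReg L (-z) = -weierstrassZetaReg L z := by
  rw [weierstrassZetaReg, weierstrassZetaReg, ← (Equiv.neg L.lattice).tsum_eq, ← tsum_neg]
  refine tsum_congr fun l ↦ ?_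
  simp only [weierstrassZetaSummand, Equiv.neg_apply, NegMemClass.coe_neg, neg_eq_zero]
  split_ifs
  · simp
  · rw [show -z - -(l : ℂ) = -(z - l) by ring, div_neg, div_neg, neg_sq]
    ring

lemma weierstrassZetaReg_zero : weierstrassZetaReg L 0 = 0 :=
  self_eq_neg.mp (by simpa using weierstrassZetaReg_neg L 0)

lemma weierstrassZeta_neg (z : ℂ) : weierstrassZeta L (-z) = -weierstrassZeta L z := by
  simp only [weierstrassZeta, weierstrassZetaReg_neg, div_neg, neg_add]

lemma weierstrassP_eq_one_div_sq_add (z : ℂ) : ℘[L] z = 1 / z ^ 2 + L.weierstrassPExcept 0 z := by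
  simpa [add_comm] using (L.weierstrassPExcept_add 0 z).symm

lemma hasDerivAt_weierstrassZeta {z : ℂ} (hz : z ∉ L.lattice) :
    HasDerivAt (weierstrassZeta L) (-℘[L] z) z := by
  have hz₀ : z ≠ 0 := by rintro rfl; exact hz (zero_mem _)
  have h := (hasDerivAt_inv hz₀).add (hasDerivAt_weierstrassZetaReg L fun hz' ↦ hz hz'.1)
  rw [weierstrassP_eq_one_div_sq_add]
  exact (h.congr_deriv (by ring)).congr_of_eventuallyEq
    (.of_forall fun w ↦ by simp [weierstrassZeta])

lemma hasDerivAt_weierstrassP {z : ℂ} (hz : z ∉ L.lattice) : HasDerivAt ℘[L] (℘'[L] z) z := by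
  rw [← L.deriv_weierstrassP]
  exact (L.analyticOnNhd_weierstrassP z hz).differentiableAt.hasDerivAt

lemma exists_weierstrassZeta_add_eq (l : L.lattice) :
    ∃ η, ∀ z ∉ L.lattice, weierstrassZeta L (z + l) = weierstrassZeta L z + η := by
  have hconn : IsPreconnected (L.lattice : Set ℂ)ᶜ :=
    (Set.Countable.isConnected_compl_of_one_lt_rank (by simp)
      (countable_of_Lindelof_of_discrete (X := L.lattice))).2
  have hderiv : ∀ z ∈ (L.lattice : Set ℂ)ᶜ,
      HasDerivAt (fun z ↦ weierstrassZeta L (z + l) - weierstrassZeta L z) 0 z := by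
    intro z hz
    have hzl : z + l ∉ L.lattice := by rwa [add_mem_cancel_right l.2]
    refine (((hasDerivAt_weierstrassZeta L hzl).comp_add_const z (l : ℂ)).sub
      (hasDerivAt_weierstrassZeta L hz)).congr_deriv ?_
    simp
  obtain ⟨η, hη⟩ := L.isClosed_lattice.isOpen_compl.exists_is_const_of_deriv_eq_zero hconn
    (fun z hz ↦ (hderiv z hz).differentiableAt.differentiableWithinAt)
    fun z hz ↦ (hderiv z hz).deriv
  exact ⟨η, fun z hz ↦ by rw [← hη z hz]; ring⟩

/-- The constant is found by evaluating the quasi-periodicity at `-w`, where `ζ` is odd. -/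
lemma weierstrassZeta_add_two_mul {w z : ℂ} (hw : 2 * w ∈ L.lattice) (hw' : w ∉ L.lattice)
    (hz : z ∉ L.lattice) :
    weierstrassZeta L (z + 2 * w) = weierstrassZeta L z + 2 * weierstrassZeta L w := by
  obtain ⟨η, hη⟩ := exists_weierstrassZeta_add_eq L ⟨2 * w, hw⟩
  have hη_eq : weierstrassZeta L w = -weierstrassZeta L w + η := by
    have h := hη (-w) (by rwa [neg_mem_iff])
    rwa [weierstrassZeta_neg, show -w + 2 * w = w by ring] at h
  linear_combination hη z hz - hη_eq

end WeierstrassZeta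

section Liouville

open Topology

variable (L : PeriodPair)

lemma eq_zero_of_periodic_of_tendsto_zero {P : Set ℂ} {f : ℂ → ℂ} (hne : P.Nonempty)
    (hP : ∀ x, ∀ l ∈ L.lattice, x + l ∈ P ↔ x ∈ P) (hiso : ∀ x, ∀ᶠ z in 𝓝[≠] x, z ∉ P)
    (hf : ∀ x ∉ P, ∀ l ∈ L.lattice, f (x + l) = f x) (hd : ∀ x ∉ P, DifferentiableAt ℂ f x)
    (h₀ : ∀ x ∈ P, Tendsto f (𝓝[≠] x) (𝓝 0)) {x : ℂ} (hx : x ∉ P) : f x = 0 := by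
  set F : ℂ → ℂ := Pᶜ.indicator f
  have hFf : ∀ z ∉ P, F z = f z := fun z hz ↦ Set.indicator_of_mem hz f
  have hF₀ : ∀ z ∈ P, F z = 0 := fun z hz ↦ Set.indicator_of_notMem (by simpa using hz) f
  have hFd : ∀ z ∉ P, DifferentiableAt ℂ F z := by
    intro z hz
    refine (hd z hz).congr_of_eventuallyEq ?_
    filter_upwards [eventually_nhdsWithin_iff.mp (hiso z)] with w hw
    obtain rfl | hwz := eq_or_ne w z
    exacts [hFf w hz, hFf w (hw hwz)]
  have hF_diff : Differentiable ℂ F := by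
    intro z
    by_cases hz : z ∈ P
    · refine (Complex.analyticAt_of_differentiable_on_punctured_nhds_of_continuousAt
        ((hiso z).mono hFd) ?_).differentiableAt
      rw [continuousAt_iff_punctured_nhds, hF₀ z hz]
      exact (h₀ z hz).congr' ((hiso z).mono fun w hw ↦ (hFf w hw).symm)
    · exact hFd z hz
  have hF_per : ∀ z, ∀ l ∈ L.lattice, F (z + l) = F z := by
    intro z l hl
    by_cases hz : z ∈ P
    · rw [hF₀ z hz, hF₀ _ ((hP z l hl).mpr hz)]
    · rw [hFf z hz, hFf _ (mt (hP z l hl).mp hz), hf z hz l hl]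
  obtain ⟨y, hy⟩ := hne
  rw [← hFf x hx, ← hF₀ y hy]
  exact hF_diff.apply_eq_apply_of_bounded (IsZLattice.isCompact_range_of_periodic L.lattice F
    hF_diff.continuous hF_per).isBounded x y

end Liouville

section AdditionTheorem

open PeriodPair Topology

variable (L : PeriodPair)

lemma eventually_notMem_lattice (x : ℂ) : ∀ᶠ z in 𝓝[≠] x, z ∉ L.lattice := by
  filter_upwards [mem_nhdsWithin_of_mem_nhds (L.compl_lattice_sdiff_singleton_mem_nhds x),
    self_mem_nhdsWithin] with z hz hzx hzL
  exact hz ⟨hzL, hzx⟩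

/-- The difference of the two sides of the quadratic addition theorem for `ζ`, as a function of `x`
for fixed `y`. It is elliptic, and the addition theorem states that it vanishes. -/
def weierstrassZetaDefect (y x : ℂ) : ℂ :=
  (weierstrassZeta L x + weierstrassZeta L y - weierstrassZeta L (x + y)) ^ 2
    - (℘[L] x + ℘[L] y + ℘[L] (x + y))

/-- The poles of `weierstrassZetaDefect L y`. -/
def weierstrassZetaDefectPoles (y : ℂ) : Set ℂ := {x | x ∈ L.lattice ∨ x + y ∈ L.lattice}

variable {L}

lemma weierstrassZetaDefect_neg_sub (y x : ℂ) :
    weierstrassZetaDefect L y (-x - y) = weierstrassZetaDefect L y x := by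
  simp only [weierstrassZetaDefect, show -x - y = -(x + y) by ring, show -(x + y) + y = -x by ring,
    weierstrassZeta_neg, weierstrassP_neg]
  ring

lemma weierstrassZetaDefect_add_period {x y l : ℂ} (hx : x ∉ weierstrassZetaDefectPoles L y)
    (hl : l ∈ L.lattice) : weierstrassZetaDefect L y (x + l) = weierstrassZetaDefect L y x := by
  obtain ⟨hx, hxy⟩ := not_or.mp hx
  lift l to L.lattice using hl
  obtain ⟨η, hη⟩ := exists_weierstrassZeta_add_eq L l
  simp only [weierstrassZetaDefect, add_right_comm x (l : ℂ) y, hη x hx, hη _ hxy,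
    L.weierstrassP_add_coe]
  ring

lemma add_mem_weierstrassZetaDefectPoles_iff {x y l : ℂ} (hl : l ∈ L.lattice) :
    x + l ∈ weierstrassZetaDefectPoles L y ↔ x ∈ weierstrassZetaDefectPoles L y := by
  simp only [weierstrassZetaDefectPoles, Set.mem_ofPred_eq, add_right_comm x l y,
    add_mem_cancel_right hl]

lemma eventually_notMem_weierstrassZetaDefectPoles (y x : ℂ) :
    ∀ᶠ z in 𝓝[≠] x, z ∉ weierstrassZetaDefectPoles L y := by
  have hshift : Tendsto (· + y) (𝓝[≠] x) (𝓝[≠] (x + y)) :=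
    tendsto_nhdsWithin_iff.mpr ⟨((continuous_add_const y).tendsto x).mono_left nhdsWithin_le_nhds,
      by filter_upwards [self_mem_nhdsWithin] with z hz; simpa using hz⟩
  filter_upwards [eventually_notMem_lattice L x,
    hshift.eventually (eventually_notMem_lattice L (x + y))] with z hz hzy
  exact not_or.mpr ⟨hz, hzy⟩

lemma differentiableAt_weierstrassZetaDefect {x y : ℂ}
    (hx : x ∉ weierstrassZetaDefectPoles L y) :
    DifferentiableAt ℂ (weierstrassZetaDefect L y) x := by
  obtain ⟨hx, hxy⟩ := not_or.mp hx
  have hζ := (hasDerivAt_weierstrassZeta L hx).differentiableAt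
  have hζy := ((hasDerivAt_weierstrassZeta L hxy).comp_add_const x y).differentiableAt
  have hP := (hasDerivAt_weierstrassP L hx).differentiableAt
  have hPy := ((hasDerivAt_weierstrassP L hxy).comp_add_const x y).differentiableAt
  unfold weierstrassZetaDefect
  fun_prop

/-- Write `ζ(x) + ζ(y) - ζ(x + y) = 1 / x + g(x)` with `g(x) = ℘(y) x + O(x²)`. The double pole of
the square cancels that of `℘(x)`, and the constant term `2 ℘(y)` cancels the two remaining
`℘`-values. -/
lemma tendsto_weierstrassZetaDefect_zero {y : ℂ} (hy : y ∉ L.lattice) :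
    Tendsto (weierstrassZetaDefect L y) (𝓝[≠] 0) (𝓝 0) := by
  set g : ℂ → ℂ := fun x ↦ weierstrassZetaReg L x + weierstrassZeta L y - weierstrassZeta L (x + y)
    with hg
  have hy₀ : 0 + y ∉ L.lattice := by rwa [zero_add]
  have hg₀ : g 0 = 0 := by simp [hg, weierstrassZetaReg_zero]
  have hg_deriv : HasDerivAt g (℘[L] y) 0 := by
    refine (((hasDerivAt_weierstrassZetaReg L (by simp)).add_const _).sub
      ((hasDerivAt_weierstrassZeta L hy₀).comp_add_const 0 y)).congr_deriv ?_
    simp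
  have hg_cont : Tendsto g (𝓝[≠] 0) (𝓝 (g 0)) := hg_deriv.continuousAt.continuousWithinAt
  have hP : Tendsto (L.weierstrassPExcept 0) (𝓝[≠] 0) (𝓝 (L.weierstrassPExcept 0 0)) :=
    (L.analyticAt_weierstrassPExcept 0).continuousAt.continuousWithinAt
  have hPy : Tendsto (fun x ↦ ℘[L] (x + y)) (𝓝[≠] 0) (𝓝 (℘[L] (0 + y))) :=
    ((hasDerivAt_weierstrassP L hy₀).comp_add_const 0 y).continuousAt.continuousWithinAt
  have hlim := (((hg_deriv.tendsto_slope.const_mul 2).add (hg_cont.pow 2)).sub hP).sub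
    (hPy.const_add (℘[L] y))
  rw [hg₀, L.weierstrassPExcept_zero, zero_add y,
    show 2 * ℘[L] y + 0 ^ 2 - 0 - (℘[L] y + ℘[L] y) = 0 by ring] at hlim
  refine hlim.congr' ?_
  filter_upwards [self_mem_nhdsWithin] with x (hx : x ≠ 0)
  have hsplit : weierstrassZeta L x + weierstrassZeta L y - weierstrassZeta L (x + y)
      = 1 / x + g x := by
    simp only [weierstrassZeta, hg]
    ring
  rw [weierstrassZetaDefect, weierstrassP_eq_one_div_sq_add L x, hsplit, slope_def_field, hg₀]
  field_simp
  ring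

lemma tendsto_weierstrassZetaDefect {x y : ℂ} (hy : y ∉ L.lattice)
    (hx : x ∈ weierstrassZetaDefectPoles L y) :
    Tendsto (weierstrassZetaDefect L y) (𝓝[≠] x) (𝓝 0) := by
  have hlattice : ∀ x ∈ L.lattice, Tendsto (weierstrassZetaDefect L y) (𝓝[≠] x) (𝓝 0) := by
    intro x hx
    have hshift : Tendsto (· - x) (𝓝[≠] x) (𝓝[≠] 0) :=
      tendsto_nhdsWithin_iff.mpr ⟨tendsto_sub_nhds_zero_iff.mpr nhdsWithin_le_nhds,
        by filter_upwards [self_mem_nhdsWithin] with z hz; simpa [sub_eq_zero] using hz⟩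
    refine ((tendsto_weierstrassZetaDefect_zero hy).comp hshift).congr' ?_
    filter_upwards [eventually_notMem_weierstrassZetaDefectPoles y x] with z hz
    simpa [sub_eq_add_neg] using weierstrassZetaDefect_add_period hz (neg_mem hx)
  obtain hx | hxy := hx
  · exact hlattice x hx
  · have hreflect : Tendsto (fun z ↦ -z - y) (𝓝[≠] x) (𝓝[≠] (-x - y)) :=
      tendsto_nhdsWithin_iff.mpr
        ⟨((by fun_prop : Continuous fun z ↦ -z - y).tendsto x).mono_left nhdsWithin_le_nhds,
          by filter_upwards [self_mem_nhdsWithin] with z hz; simpa using hz⟩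
    have hmem : -x - y ∈ L.lattice := by rw [← neg_add']; exact neg_mem hxy
    exact ((hlattice _ hmem).comp hreflect).congr (weierstrassZetaDefect_neg_sub y)

theorem sq_weierstrassZeta_add_sub {x y : ℂ} (hx : x ∉ L.lattice) (hy : y ∉ L.lattice)
    (hxy : x + y ∉ L.lattice) :
    (weierstrassZeta L x + weierstrassZeta L y - weierstrassZeta L (x + y)) ^ 2
      = ℘[L] x + ℘[L] y + ℘[L] (x + y) :=
  sub_eq_zero.mp <| eq_zero_of_periodic_of_tendsto_zero L (P := weierstrassZetaDefectPoles L y)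
    ⟨0, .inl (zero_mem _)⟩ (fun _ _ ↦ add_mem_weierstrassZetaDefectPoles_iff)
    (eventually_notMem_weierstrassZetaDefectPoles y)
    (fun _ h _ ↦ weierstrassZetaDefect_add_period h)
    (fun _ ↦ differentiableAt_weierstrassZetaDefect)
    (fun _ ↦ tendsto_weierstrassZetaDefect hy) (not_or.mpr ⟨hx, hxy⟩)

lemma two_mul_weierstrassZeta_add_sub_mul {x y : ℂ} (hx : x ∉ L.lattice) (hy : y ∉ L.lattice)
    (hxy : x + y ∉ L.lattice) :
    2 * (weierstrassZeta L x + weierstrassZeta L y - weierstrassZeta L (x + y))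
        * (℘[L] (x + y) - ℘[L] x) = ℘'[L] x + ℘'[L] (x + y) := by
  have hlhs := (((hasDerivAt_weierstrassZeta L hx).add_const (weierstrassZeta L y)).sub
    ((hasDerivAt_weierstrassZeta L hxy).comp_add_const x y)).pow 2
  have hrhs := ((hasDerivAt_weierstrassP L hx).add_const (℘[L] y)).add
    ((hasDerivAt_weierstrassP L hxy).comp_add_const x y)
  have hopen := L.isClosed_lattice.isOpen_compl
  have heq : (fun z ↦ ℘[L] z + ℘[L] y + ℘[L] (z + y)) =ᶠ[𝓝 x] fun z ↦
      (weierstrassZeta L z + weierstrassZeta L y - weierstrassZeta L (z + y)) ^ 2 := by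
    filter_upwards [hopen.mem_nhds hx,
      (continuous_add_const y).continuousAt.preimage_mem_nhds (hopen.mem_nhds hxy)] with z hz hzy
    exact (sq_weierstrassZeta_add_sub hz hy hzy).symm
  have h := (hlhs.congr_of_eventuallyEq heq).unique hrhs
  simp only [Pi.sub_apply, Nat.cast_ofNat, Nat.add_one_sub_one, pow_one] at h
  linear_combination h

end AdditionTheorem

/-- The properties of the functions `ζ`, `p`, `f` with poles in `Λ` which make the spin-pole
dynamics with these interaction functions integrable: parity, differentiability of `f`, and the
functional equation `three_body`, in which interchanging `u` and `v` changes the three-body term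
`p u * (f v - f (v - u)) - ζ u * f' v` only by a difference of one-variable functions. -/
structure IsSpinPoleInteraction (Λ : Set ℂ) (ζ p f : ℂ → ℂ) : Prop where
  neg_mem : ∀ z ∈ Λ, -z ∈ Λ
  even_p : p.Even
  even_f : f.Even
  differentiableAt_f : ∀ z ∉ Λ, DifferentiableAt ℂ f z
  three_body : ∃ h : ℂ → ℂ, ∀ u ∉ Λ, ∀ v ∉ Λ, v - u ∉ Λ →
    p u * (f v - f (v - u)) - ζ u * deriv f v - (p v * (f u - f (v - u)) - ζ v * deriv f u)
      = h v - h u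

section ModifiedWeierstrass

open PeriodPair

variable (L : PeriodPair) (c : ℂ)

/-- The Weierstrass `ζ`-function with a linear term subtracted. With `c = ζ(w) / w` it has
period `2 * w`. -/
def modifiedZeta (z : ℂ) : ℂ := weierstrassZeta L z - c * z

/-- Minus the derivative of `modifiedZeta L c`. -/
def modifiedP (z : ℂ) : ℂ := ℘[L] z + c

/-- The interaction potential `ζ² - ℘` built from the modified Weierstrass functions. -/
def modifiedF (z : ℂ) : ℂ := modifiedZeta L c z ^ 2 - modifiedP L c z

lemma modifiedZeta_add_two_mul {w z : ℂ} (hw : 2 * w ∈ L.lattice) (hw' : w ∉ L.lattice)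
    (hz : z ∉ L.lattice) :
    modifiedZeta L (weierstrassZeta L w / w) (z + 2 * w)
      = modifiedZeta L (weierstrassZeta L w / w) z := by
  have hw₀ : w ≠ 0 := by rintro rfl; exact hw' (zero_mem _)
  rw [modifiedZeta, modifiedZeta, weierstrassZeta_add_two_mul L hw hw' hz]
  field_simp
  ring

lemma even_modifiedP : (modifiedP L c).Even := fun z ↦ by
  rw [modifiedP, modifiedP, L.weierstrassP_neg]

lemma even_modifiedF : (modifiedF L c).Even := fun z ↦ by
  simp only [modifiedF, modifiedZeta, weierstrassZeta_neg, even_modifiedP L c z]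
  ring

lemma hasDerivAt_modifiedF {z : ℂ} (hz : z ∉ L.lattice) :
    HasDerivAt (modifiedF L c) (-2 * modifiedZeta L c z * modifiedP L c z - ℘'[L] z) z := by
  have hζ : HasDerivAt (modifiedZeta L c) (-modifiedP L c z) z :=
    ((hasDerivAt_weierstrassZeta L hz).sub ((hasDerivAt_id z).const_mul c)).congr_deriv
      (by rw [modifiedP]; ring)
  have hp : HasDerivAt (modifiedP L c) (℘'[L] z) z := (hasDerivAt_weierstrassP L hz).add_const c
  refine ((hζ.pow 2).sub hp).congr_deriv ?_
  simp only [Nat.cast_ofNat, Nat.add_one_sub_one, pow_one]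
  ring

/-- One-variable function on the right-hand side of the three-body functional equation. -/
def modifiedThreeBody (z : ℂ) : ℂ :=
  modifiedP L c z * modifiedZeta L c z ^ 2 + modifiedP L c z ^ 2 - 3 * c * modifiedP L c z
    + modifiedZeta L c z * ℘'[L] z

lemma modified_three_body {u v : ℂ} (hu : u ∉ L.lattice) (hv : v ∉ L.lattice)
    (hvu : v - u ∉ L.lattice) :
    modifiedP L c u * (modifiedF L c v - modifiedF L c (v - u))
        - modifiedZeta L c u * deriv (modifiedF L c) v
        - (modifiedP L c v * (modifiedF L c u - modifiedF L c (v - u))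
          - modifiedZeta L c v * deriv (modifiedF L c) u)
      = modifiedThreeBody L c v - modifiedThreeBody L c u := by
  have hsum : u + (v - u) = v := by ring
  have hquad := sq_weierstrassZeta_add_sub hu hvu (by rwa [hsum])
  have hderiv := two_mul_weierstrassZeta_add_sub_mul hu hvu (by rwa [hsum])
  rw [hsum] at hquad hderiv
  rw [(hasDerivAt_modifiedF L c hu).deriv, (hasDerivAt_modifiedF L c hv).deriv]
  simp only [modifiedThreeBody, modifiedF, modifiedZeta, modifiedP]
  linear_combination (℘[L] v - ℘[L] u) * hquad
    + (weierstrassZeta L v - c * v - (weierstrassZeta L u - c * u)) * hderiv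

theorem isSpinPoleInteraction_modified :
    IsSpinPoleInteraction L.lattice (modifiedZeta L c) (modifiedP L c) (modifiedF L c) where
  neg_mem _ := neg_mem
  even_p := even_modifiedP L c
  even_f := even_modifiedF L c
  differentiableAt_f _ hz := (hasDerivAt_modifiedF L c hz).differentiableAt
  three_body := ⟨modifiedThreeBody L c, fun _ hu _ hv hvu ↦ modified_three_body L c hu hv hvu⟩

end ModifiedWeierstrass

section SkewSums

variable {ι : Type*} [Fintype ι]

lemma sum_sum_eq_zero_of_skew {E : Type*} [AddCommGroup E] [IsAddTorsionFree E] {A : ι → ι → E}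
    (hA : ∀ j k, A k j = -A j k) : ∑ j, ∑ k, A j k = 0 := by
  refine self_eq_neg.mp (Finset.sum_comm.trans ?_)
  simp only [← Finset.sum_neg_distrib, ← hA]

lemma sum_sum_add_swap {E : Type*} [AddCommMonoid E] (A : ι → ι → E) :
    ∑ j, ∑ k, (A j k + A k j) = 2 • ∑ j, ∑ k, A j k := by
  simp only [Finset.sum_add_distrib, two_nsmul]
  rw [Finset.sum_comm (f := fun j k ↦ A k j)]

/-- Only the skew part of `F` contributes, and a skew part of the form `h k - h l` is killed by the
vanishing row sums. -/
lemma sum_mul_eq_zero_of_skew {R : Type*} [CommRing R] [IsAddTorsionFree R] {T F : ι → ι → R}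
    {h : ι → R} (hT : ∀ l k, T k l = -T l k) (hT₀ : ∀ l, ∑ k, T l k = 0)
    (hF : ∀ l k, T l k ≠ 0 → F l k - F k l = h k - h l) : ∑ l, ∑ k, T l k * F l k = 0 := by
  have hterm : ∀ l k, T l k * F l k + T k l * F k l = T l k * h k + T k l * h l := by
    intro l k
    rw [hT l k]
    by_cases hlk : T l k = 0
    · simp [hlk]
    · linear_combination T l k * hF l k hlk
  have hcol : ∑ l, ∑ k, T l k * h k = 0 := by
    rw [Finset.sum_comm]
    refine Finset.sum_eq_zero fun k _ ↦ ?_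
    calc ∑ l, T l k * h k = (-∑ l, T k l) * h k := by
          simp only [← Finset.sum_neg_distrib, Finset.sum_mul, ← hT k]
      _ = 0 := by rw [hT₀, neg_zero, zero_mul]
  have htwo : 2 • ∑ l, ∑ k, T l k * F l k = 2 • ∑ l, ∑ k, T l k * h k := by
    rw [← sum_sum_add_swap, ← sum_sum_add_swap]
    simp only [hterm]
  rw [hcol, smul_zero] at htwo
  exact (smul_eq_zero_iff_right two_ne_zero).mp htwo

end SkewSums

section SpinPoleDynamics

open scoped Matrix

variable {ι : Type*} [Fintype ι]

/-- Time derivative of the spin `S j` of the pole `x j` in a system of poles with charges `r`. The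
term `k = j` contributes nothing, since `S j ⨯₃ S j = 0`. -/
def spinRate (p : ℂ → ℂ) (r x : ι → ℂ) (S : ι → Fin 3 → ℂ) (j : ι) : Fin 3 → ℂ :=
  -∑ k, ((r j + r k) * p (x j - x k)) • S j ⨯₃ S k

/-- The vector which the equation of motion of the pole `x j` equates with `xdot j • S j`. -/
def poleTorque (ζ : ℂ → ℂ) (r : ι → ℂ) (φ : Fin 3 → ℂ) (x : ι → ℂ) (S : ι → Fin 3 → ℂ) (j : ι) :
    Fin 3 → ℂ :=
  -(r j • S j ⨯₃ (Complex.I • φ - ∑ k, ζ (x j - x k) • S k))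

/-- Time derivative of the background vector `φ`. -/
def backgroundRate (f : ℂ → ℂ) (r x : ι → ℂ) (S : ι → Fin 3 → ℂ) : Fin 3 → ℂ :=
  (Complex.I / 4) • ∑ j, ∑ k, ((r j + r k) * deriv f (x j - x k)) • S j ⨯₃ S k

/-- The conserved quantity `R` of a system of poles `x` with spins `S` and background `φ`. -/
def spinPoleEnergy [DecidableEq ι] (f : ℂ → ℂ) (φ : Fin 3 → ℂ) (x : ι → ℂ) (S : ι → Fin 3 → ℂ) :
    ℂ :=
  φ ⬝ᵥ φ - (1 / 2) * ∑ j, ∑ k ∈ univ.erase j, S j ⬝ᵥ S k * f (x j - x k)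

variable {Λ : Set ℂ} {ζ p f : ℂ → ℂ} {r x xdot : ι → ℂ} {φ : Fin 3 → ℂ} {S : ι → Fin 3 → ℂ}

lemma deriv_neg_of_even (hf : f.Even) (z : ℂ) : deriv f (-z) = -deriv f z := by
  have h := deriv_comp_neg f z
  rw [show (fun w ↦ f (-w)) = f from funext hf] at h
  rw [h, neg_neg]

lemma sum_spinRate (hp : p.Even) : ∑ j, spinRate p r x S j = 0 := by
  simp only [spinRate, Finset.sum_neg_distrib, neg_eq_zero]
  refine sum_sum_eq_zero_of_skew fun j k ↦ ?_
  rw [← neg_sub, hp, add_comm (r k), ← cross_anticomm, smul_neg]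

lemma backgroundRate_dotProduct (hf : f.Even) :
    backgroundRate f r x S ⬝ᵥ φ
      = (Complex.I / 2) * ∑ j, ∑ k, r j * deriv f (x j - x k) * φ ⬝ᵥ S j ⨯₃ S k := by
  have hsymm : ∀ j k, (r j + r k) * deriv f (x j - x k) * φ ⬝ᵥ S j ⨯₃ S k
      = r j * deriv f (x j - x k) * φ ⬝ᵥ S j ⨯₃ S k
        + r k * deriv f (x k - x j) * φ ⬝ᵥ S k ⨯₃ S j := fun j k ↦ by
    rw [← neg_sub (x j), deriv_neg_of_even hf, ← cross_anticomm (S j), dotProduct_neg]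
    ring
  rw [dotProduct_comm]
  simp only [backgroundRate, dotProduct_smul, dotProduct_sum, smul_eq_mul, hsymm]
  rw [sum_sum_add_swap fun j k ↦ r j * deriv f (x j - x k) * φ ⬝ᵥ S j ⨯₃ S k, nsmul_eq_mul]
  push_cast
  ring

lemma spinRate_dotProduct (j k : ι) :
    spinRate p r x S j ⬝ᵥ S k
      = -∑ l, (r j + r l) * p (x j - x l) * S j ⬝ᵥ S l ⨯₃ S k := by
  rw [dotProduct_comm]
  simp only [spinRate, dotProduct_neg, dotProduct_sum, dotProduct_smul, smul_eq_mul,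
    triple_product_permutation (S k)]

lemma poleTorque_dotProduct (j k : ι) :
    poleTorque ζ r φ x S j ⬝ᵥ S k
      = Complex.I * (r j * φ ⬝ᵥ S j ⨯₃ S k)
        + ∑ l, r j * ζ (x j - x l) * S j ⬝ᵥ S l ⨯₃ S k := by
  have hφ : S k ⬝ᵥ S j ⨯₃ φ = -(φ ⬝ᵥ S j ⨯₃ S k) := by
    rw [← triple_product_permutation, ← cross_anticomm, dotProduct_neg]
  rw [dotProduct_comm]
  simp only [poleTorque, map_sub, map_smul, map_sum, dotProduct_neg, dotProduct_smul,
    dotProduct_sub, dotProduct_sum, smul_eq_mul, hφ, triple_product_permutation (S k), mul_assoc,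
    ← Finset.mul_sum]
  ring

lemma sum_tripleProduct_mul_three_body_eq_zero (hI : IsSpinPoleInteraction Λ ζ p f)
    (hx : ∀ j k, j ≠ k → x j - x k ∉ Λ) (hS : ∑ j, S j = 0) (j : ι) :
    ∑ l, ∑ k, S j ⬝ᵥ S l ⨯₃ S k *
      (p (x j - x l) * (f (x j - x k) - f (x l - x k)) - ζ (x j - x l) * deriv f (x j - x k))
      = 0 := by
  obtain ⟨h, hh⟩ := hI.three_body
  refine sum_mul_eq_zero_of_skew (h := fun k ↦ h (x j - x k)) (fun l k ↦ ?_) (fun l ↦ ?_)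
    fun l k hlk ↦ ?_
  · rw [← cross_anticomm, dotProduct_neg]
  · simp [← dotProduct_sum, ← map_sum, hS]
  · have hjl : j ≠ l := by rintro rfl; exact hlk (dot_self_cross _ _)
    have hjk : j ≠ k := by rintro rfl; exact hlk (dot_cross_self _ _)
    have hlk' : l ≠ k := by rintro rfl; simp at hlk
    have hkey := hh _ (hx j l hjl) _ (hx j k hjk)
      (by rw [sub_sub_sub_cancel_left]; exact hx l k hlk')
    rw [sub_sub_sub_cancel_left] at hkey
    rwa [← neg_sub (x l) (x k), hI.even_f]

lemma sum_three_body_eq_zero (hI : IsSpinPoleInteraction Λ ζ p f)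
    (hx : ∀ j k, j ≠ k → x j - x k ∉ Λ) (hS : ∑ j, S j = 0) :
    ∑ j, ∑ k, ∑ l, ((r j + r l) * p (x j - x l) * f (x j - x k)
      - r j * ζ (x j - x l) * deriv f (x j - x k)) * S j ⬝ᵥ S l ⨯₃ S k = 0 := by
  have hskew : ∑ j, ∑ l, ∑ k, p (x j - x l) * (r l * f (x j - x k) + r j * f (x l - x k))
      * S j ⬝ᵥ S l ⨯₃ S k = 0 := by
    refine sum_sum_eq_zero_of_skew fun j l ↦ ?_
    rw [← Finset.sum_neg_distrib]
    refine Finset.sum_congr rfl fun k _ ↦ ?_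
    rw [← neg_sub (x j), hI.even_p, triple_product_permutation (S l), ← cross_anticomm (S k),
      dotProduct_neg]
    ring
  have hfixed := fun j ↦ sum_tripleProduct_mul_three_body_eq_zero hI hx hS j
  calc ∑ j, ∑ k, ∑ l, ((r j + r l) * p (x j - x l) * f (x j - x k)
        - r j * ζ (x j - x l) * deriv f (x j - x k)) * S j ⬝ᵥ S l ⨯₃ S k
      = ∑ j, ∑ l, ∑ k, (p (x j - x l) * (r l * f (x j - x k) + r j * f (x l - x k))
          * S j ⬝ᵥ S l ⨯₃ S k + r j * (S j ⬝ᵥ S l ⨯₃ S k *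
          (p (x j - x l) * (f (x j - x k) - f (x l - x k))
            - ζ (x j - x l) * deriv f (x j - x k)))) := by
        refine Finset.sum_congr rfl fun j _ ↦ Finset.sum_comm.trans ?_
        refine Finset.sum_congr rfl fun l _ ↦ Finset.sum_congr rfl fun k _ ↦ ?_
        ring
    _ = 0 := by
        simp only [Finset.sum_add_distrib, ← Finset.mul_sum, hskew, hfixed, mul_zero,
          add_zero]

lemma energy_rate_eq_zero (hI : IsSpinPoleInteraction Λ ζ p f)
    (hx : ∀ j k, j ≠ k → x j - x k ∉ Λ) (hS : ∑ j, S j = 0)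
    (hxdot : ∀ j, xdot j • S j = poleTorque ζ r φ x S j) :
    2 * backgroundRate f r x S ⬝ᵥ φ - (1 / 2) * ∑ j, ∑ k,
      ((spinRate p r x S j ⬝ᵥ S k + S j ⬝ᵥ spinRate p r x S k) * f (x j - x k)
        + S j ⬝ᵥ S k * (deriv f (x j - x k) * (xdot j - xdot k))) = 0 := by
  set B : ι → ι → ℂ := fun j k ↦ spinRate p r x S j ⬝ᵥ S k * f (x j - x k)
    + poleTorque ζ r φ x S j ⬝ᵥ S k * deriv f (x j - x k) with hB
  have hsymm : ∀ j k, (spinRate p r x S j ⬝ᵥ S k + S j ⬝ᵥ spinRate p r x S k) * f (x j - x k)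
      + S j ⬝ᵥ S k * (deriv f (x j - x k) * (xdot j - xdot k)) = B j k + B k j := fun j k ↦ by
    simp only [hB, ← hxdot, smul_dotProduct, smul_eq_mul]
    rw [← neg_sub (x j), hI.even_f, deriv_neg_of_even hI.even_f, dotProduct_comm (S k) (S j),
      dotProduct_comm (S j) (spinRate p r x S k)]
    ring
  have hB_expand : ∀ j k, B j k
      = Complex.I * (r j * deriv f (x j - x k) * φ ⬝ᵥ S j ⨯₃ S k)
        - ∑ l, ((r j + r l) * p (x j - x l) * f (x j - x k)
          - r j * ζ (x j - x l) * deriv f (x j - x k)) * S j ⬝ᵥ S l ⨯₃ S k := fun j k ↦ by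
    simp only [hB, spinRate_dotProduct, poleTorque_dotProduct, sub_mul, Finset.sum_sub_distrib,
      neg_mul, add_mul _ _ (deriv f _), Finset.sum_mul, mul_right_comm _ (S j ⬝ᵥ _)]
    ring
  simp only [hsymm, sum_sum_add_swap B, nsmul_eq_mul]
  simp only [hB_expand, Finset.sum_sub_distrib, sum_three_body_eq_zero hI hx hS,
    backgroundRate_dotProduct hI.even_f, ← Finset.mul_sum]
  push_cast
  ring

end SpinPoleDynamics

section Calculus

lemma hasDerivWithinAt_dotProduct {n 𝕜 𝔸 : Type*} [Fintype n] [NontriviallyNormedField 𝕜]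
    [NormedRing 𝔸] [NormedAlgebra 𝕜 𝔸] {u v : 𝕜 → n → 𝔸} {u' v' : n → 𝔸} {s : Set 𝕜} {τ : 𝕜}
    (hu : HasDerivWithinAt u u' s τ) (hv : HasDerivWithinAt v v' s τ) :
    HasDerivWithinAt (fun τ ↦ u τ ⬝ᵥ v τ) (u' ⬝ᵥ v τ + u τ ⬝ᵥ v') s τ := by
  rw [hasDerivWithinAt_pi] at hu hv
  simp only [dotProduct, ← Finset.sum_add_distrib]
  exact .fun_sum fun i _ ↦ (hu i).mul (hv i)

lemma eq_of_hasDerivWithinAt_zero {E : Type*} [NormedAddCommGroup E] [NormedSpace ℝ E]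
    {F : ℝ → E} {J : Set ℝ} (hJ : Convex ℝ J) (hF : ∀ τ ∈ J, HasDerivWithinAt F 0 J τ) {τ₁ τ₂ : ℝ}
    (h₁ : τ₁ ∈ J) (h₂ : τ₂ ∈ J) : F τ₁ = F τ₂ := by
  have h := hJ.norm_image_sub_le_of_norm_hasDerivWithin_le hF (fun _ _ ↦ norm_zero.le) h₂ h₁
  rwa [zero_mul, norm_le_zero_iff, sub_eq_zero] at h

end Calculus

/-- Poles `x j` with charges `r j` and spins `S j`, coupled to the background `φ`, move during the
time interval `J` according to the spin-pole equations of motion. The velocities `xdot` are only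
determined by `φ`, `x` and `S` at times where the spins do not vanish. -/
structure IsSpinPoleFlow {ι : Type*} [Fintype ι] (Λ : Set ℂ) (ζ p f : ℂ → ℂ) (r : ι → ℂ)
    (J : Set ℝ) (φ : ℝ → Fin 3 → ℂ) (x : ι → ℝ → ℂ) (S : ι → ℝ → Fin 3 → ℂ)
    (xdot : ι → ℝ → ℂ) : Prop where
  hasDerivWithinAt_pole : ∀ j, ∀ τ ∈ J, HasDerivWithinAt (x j) (xdot j τ) J τ
  sub_notMem : ∀ τ ∈ J, ∀ j k, j ≠ k → x j τ - x k τ ∉ Λ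
  hasDerivWithinAt_spin : ∀ j, ∀ τ ∈ J,
    HasDerivWithinAt (S j) (spinRate p r (x · τ) (S · τ) j) J τ
  velocity_smul : ∀ j, ∀ τ ∈ J, xdot j τ • S j τ = poleTorque ζ r (φ τ) (x · τ) (S · τ) j
  hasDerivWithinAt_background : ∀ τ ∈ J,
    HasDerivWithinAt φ (backgroundRate f r (x · τ) (S · τ)) J τ

namespace IsSpinPoleFlow

variable {ι : Type*} [Fintype ι] {Λ : Set ℂ} {ζ p f : ℂ → ℂ} {r : ι → ℂ} {J : Set ℝ}
  {φ : ℝ → Fin 3 → ℂ} {x xdot : ι → ℝ → ℂ} {S : ι → ℝ → Fin 3 → ℂ}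

theorem sum_spin_eq (hflow : IsSpinPoleFlow Λ ζ p f r J φ x S xdot) (hp : p.Even)
    (hJ : Convex ℝ J) {τ₁ τ₂ : ℝ} (h₁ : τ₁ ∈ J) (h₂ : τ₂ ∈ J) : ∑ j, S j τ₁ = ∑ j, S j τ₂ := by
  refine eq_of_hasDerivWithinAt_zero (F := fun τ ↦ ∑ j, S j τ) hJ (fun τ hτ ↦ ?_) h₁ h₂
  rw [← sum_spinRate (r := r) (x := (x · τ)) (S := (S · τ)) hp]
  exact .fun_sum fun j _ ↦ hflow.hasDerivWithinAt_spin j τ hτ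

lemma hasDerivWithinAt_interaction (hflow : IsSpinPoleFlow Λ ζ p f r J φ x S xdot)
    (hf : ∀ z ∉ Λ, DifferentiableAt ℂ f z) {τ : ℝ} (hτ : τ ∈ J) {j k : ι} (hjk : j ≠ k) :
    HasDerivWithinAt (fun τ ↦ S j τ ⬝ᵥ S k τ * f (x j τ - x k τ))
      ((spinRate p r (x · τ) (S · τ) j ⬝ᵥ S k τ + S j τ ⬝ᵥ spinRate p r (x · τ) (S · τ) k)
          * f (x j τ - x k τ)
        + S j τ ⬝ᵥ S k τ * (deriv f (x j τ - x k τ) * (xdot j τ - xdot k τ))) J τ :=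
  (hasDerivWithinAt_dotProduct (hflow.hasDerivWithinAt_spin j τ hτ)
    (hflow.hasDerivWithinAt_spin k τ hτ)).mul
    ((hf _ (hflow.sub_notMem τ hτ j k hjk)).hasDerivAt.comp_hasDerivWithinAt τ
      ((hflow.hasDerivWithinAt_pole j τ hτ).sub (hflow.hasDerivWithinAt_pole k τ hτ)))

variable [DecidableEq ι]

lemma hasDerivWithinAt_energy (hflow : IsSpinPoleFlow Λ ζ p f r J φ x S xdot)
    (hI : IsSpinPoleInteraction Λ ζ p f) {τ : ℝ} (hτ : τ ∈ J) (hS : ∑ j, S j τ = 0) :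
    HasDerivWithinAt (fun τ ↦ spinPoleEnergy f (φ τ) (x · τ) (S · τ)) 0 J τ := by
  have hself : ∀ j, spinRate p r (x · τ) (S · τ) j ⬝ᵥ S j τ = 0 := fun j ↦ by
    simp [spinRate_dotProduct]
  have hφ := hflow.hasDerivWithinAt_background τ hτ
  have hint := HasDerivWithinAt.fun_sum fun j (_ : j ∈ univ) ↦ HasDerivWithinAt.fun_sum
    fun k (hk : k ∈ univ.erase j) ↦
      hflow.hasDerivWithinAt_interaction hI.differentiableAt_f hτ (Finset.ne_of_mem_erase hk).symm
  refine ((hasDerivWithinAt_dotProduct hφ hφ).sub (hint.const_mul (1 / 2))).congr_deriv ?_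
  rw [← energy_rate_eq_zero hI (hflow.sub_notMem τ hτ) hS fun j ↦ hflow.velocity_smul j τ hτ,
    dotProduct_comm (φ τ), two_mul]
  congr! 3 with j
  refine Finset.sum_erase _ ?_
  rw [dotProduct_comm (S j τ), hself, sub_self]
  ring

theorem energy_eq (hflow : IsSpinPoleFlow Λ ζ p f r J φ x S xdot)
    (hI : IsSpinPoleInteraction Λ ζ p f) (hJ : Convex ℝ J) {τ₀ : ℝ} (h₀ : τ₀ ∈ J)
    (hS : ∑ j, S j τ₀ = 0) {τ₁ τ₂ : ℝ} (h₁ : τ₁ ∈ J) (h₂ : τ₂ ∈ J) :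
    spinPoleEnergy f (φ τ₁) (x · τ₁) (S · τ₁) = spinPoleEnergy f (φ τ₂) (x · τ₂) (S · τ₂) :=
  eq_of_hasDerivWithinAt_zero (F := fun τ ↦ spinPoleEnergy f (φ τ) (x · τ) (S · τ)) hJ
    (fun _ hτ ↦ hflow.hasDerivWithinAt_energy hI hτ
      ((hflow.sum_spin_eq hI.even_p hJ hτ h₀).trans hS)) h₁ h₂

end IsSpinPoleFlow

section TwoSpecies

open scoped Matrix

lemma dot3_eq_dotProduct (u v : Fin 3 → ℂ) : dot3 u v = u ⬝ᵥ v := (Matrix.vec3_dotProduct u v).symm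

lemma cross3_eq_crossProduct (u v : Fin 3 → ℂ) : cross3 u v = u ⨯₃ v := (cross_apply u v).symm

variable {ι κ : Type*}

lemma sum_erase_smul_cross3 [Fintype ι] [DecidableEq ι] (s : ι → Fin 3 → ℂ) (g : ι → ℂ) (j : ι) :
    ∑ k ∈ univ.erase j, g k • cross3 (s j) (s k) = ∑ k, g k • s j ⨯₃ s k := by
  simp only [cross3_eq_crossProduct]
  exact Finset.sum_erase _ (by rw [cross_self, smul_zero])

lemma cross3_sum_erase_smul [Fintype ι] [DecidableEq ι] (s : ι → Fin 3 → ℂ) (g : ι → ℂ) (j : ι) :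
    s j ⨯₃ ∑ k ∈ univ.erase j, g k • s k = s j ⨯₃ ∑ k, g k • s k := by
  simp only [map_sum, map_smul]
  exact Finset.sum_erase _ (by rw [cross_self, smul_zero])

/-- Charges of two species regarded as one family of poles: `1` on the first species and `-1` on
the second. -/
def mergedCharge : ι ⊕ κ → ℂ := Sum.elim 1 (-1)

/-- Positions of two species regarded as one family of poles; the second species is shifted by
`-ω`. -/
def mergedPole (ω : ℂ) (a : ι → ℂ) (b : κ → ℂ) : ι ⊕ κ → ℂ := Sum.elim a fun k ↦ b k - ω

/-- Spins of two species regarded as one family of poles; the second species enters with the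
opposite sign. -/
def mergedSpin (s : ι → Fin 3 → ℂ) (t : κ → Fin 3 → ℂ) : ι ⊕ κ → Fin 3 → ℂ := Sum.elim s (-t)

variable [Fintype ι] [Fintype κ]

/-- Solutions on the time interval `J` of the first-order system for two species of poles `a`, `b`
with spins `s`, `t` and background `φ`, where `ω` is the shift between the species. -/
structure IsTwoSpeciesFlow [DecidableEq ι] [DecidableEq κ] (Λ : Set ℂ) (ζ p f : ℂ → ℂ) (ω : ℂ)
    (J : Set ℝ) (φ : ℝ → Fin 3 → ℂ) (a : ι → ℝ → ℂ) (s : ι → ℝ → Fin 3 → ℂ)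
    (b : κ → ℝ → ℂ) (t : κ → ℝ → Fin 3 → ℂ) (adot : ι → ℝ → ℂ) (bdot : κ → ℝ → ℂ) : Prop where
  hasDerivWithinAt_a : ∀ j, ∀ τ ∈ J, HasDerivWithinAt (a j) (adot j τ) J τ
  hasDerivWithinAt_b : ∀ j, ∀ τ ∈ J, HasDerivWithinAt (b j) (bdot j τ) J τ
  a_sub_a_notMem : ∀ τ ∈ J, ∀ j k, j ≠ k → a j τ - a k τ ∉ Λ
  b_sub_b_notMem : ∀ τ ∈ J, ∀ j k, j ≠ k → b j τ - b k τ ∉ Λ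
  a_sub_b_notMem : ∀ τ ∈ J, ∀ j k, a j τ - b k τ + ω ∉ Λ
  hasDerivWithinAt_s : ∀ j, ∀ τ ∈ J, HasDerivWithinAt (s j)
    ((-2 : ℂ) • ∑ k ∈ univ.erase j, p (a j τ - a k τ) • cross3 (s j τ) (s k τ)) J τ
  hasDerivWithinAt_t : ∀ j, ∀ τ ∈ J, HasDerivWithinAt (t j)
    ((-2 : ℂ) • ∑ k ∈ univ.erase j, p (b j τ - b k τ) • cross3 (t j τ) (t k τ)) J τ
  adot_smul : ∀ j, ∀ τ ∈ J, adot j τ • s j τ = -cross3 (s j τ)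
    (Complex.I • φ τ - ∑ k ∈ univ.erase j, ζ (a j τ - a k τ) • s k τ
      + ∑ k, ζ (a j τ - b k τ + ω) • t k τ)
  bdot_smul : ∀ j, ∀ τ ∈ J, bdot j τ • t j τ = cross3 (t j τ)
    (Complex.I • φ τ + ∑ k ∈ univ.erase j, ζ (b j τ - b k τ) • t k τ
      - ∑ k, ζ (b j τ - a k τ + ω) • s k τ)
  hasDerivWithinAt_background : ∀ τ ∈ J, HasDerivWithinAt φ
    ((Complex.I / 2) • ∑ j, ∑ k ∈ univ.erase j, deriv f (a j τ - a k τ) • cross3 (s j τ) (s k τ)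
      - (Complex.I / 2) • ∑ j, ∑ k ∈ univ.erase j,
        deriv f (b j τ - b k τ) • cross3 (t j τ) (t k τ)) J τ

/-- The conserved quantity `R` of two species of poles. -/
def twoSpeciesEnergy [DecidableEq ι] [DecidableEq κ] (f : ℂ → ℂ) (ω : ℂ) (φ : Fin 3 → ℂ)
    (a : ι → ℂ) (s : ι → Fin 3 → ℂ) (b : κ → ℂ) (t : κ → Fin 3 → ℂ) : ℂ :=
  dot3 φ φ - (1 / 2) * ∑ j, ∑ k ∈ univ.erase j, dot3 (s j) (s k) * f (a j - a k)
    - (1 / 2) * ∑ j, ∑ k ∈ univ.erase j, dot3 (t j) (t k) * f (b j - b k)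
    + ∑ j, ∑ k, dot3 (s j) (t k) * f (a j - b k + ω)

section Merged

variable {ζ p f : ℂ → ℂ} {ω : ℂ} {φ : Fin 3 → ℂ} {a : ι → ℂ} {s : ι → Fin 3 → ℂ} {b : κ → ℂ}
  {t : κ → Fin 3 → ℂ}

lemma spinRate_merged_inl [DecidableEq ι] (j : ι) :
    spinRate p mergedCharge (mergedPole ω a b) (mergedSpin s t) (.inl j)
      = (-2 : ℂ) • ∑ k ∈ univ.erase j, p (a j - a k) • cross3 (s j) (s k) := by
  rw [sum_erase_smul_cross3]
  simp [spinRate, mergedCharge, mergedPole, mergedSpin, one_add_one_eq_two, mul_smul,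
    Finset.smul_sum]

lemma spinRate_merged_inr [DecidableEq κ] (j : κ) :
    spinRate p mergedCharge (mergedPole ω a b) (mergedSpin s t) (.inr j)
      = -((-2 : ℂ) • ∑ k ∈ univ.erase j, p (b j - b k) • cross3 (t j) (t k)) := by
  rw [sum_erase_smul_cross3]
  simp [spinRate, mergedCharge, mergedPole, mergedSpin, ← two_mul, mul_smul,
    Finset.smul_sum]

lemma poleTorque_merged_inl [DecidableEq ι] (j : ι) :
    poleTorque ζ mergedCharge φ (mergedPole ω a b) (mergedSpin s t) (.inl j)
      = -cross3 (s j) (Complex.I • φ - ∑ k ∈ univ.erase j, ζ (a j - a k) • s k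
        + ∑ k, ζ (a j - b k + ω) • t k) := by
  rw [cross3_eq_crossProduct, map_add, map_sub, cross3_sum_erase_smul, ← map_sub, ← map_add]
  simp only [poleTorque, mergedCharge, mergedPole, mergedSpin, Fintype.sum_sum_type, Sum.elim_inl,
    Sum.elim_inr, Pi.one_apply, Pi.neg_apply, ← sub_add, smul_neg, sum_neg_distrib, map_sub,
    map_add, map_neg, one_smul]
  abel

lemma poleTorque_merged_inr [DecidableEq κ] {j : κ}
    (hζ : ∀ k, ζ (b j - ω - a k) = ζ (b j - a k + ω)) :
    poleTorque ζ mergedCharge φ (mergedPole ω a b) (mergedSpin s t) (.inr j)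
      = -cross3 (t j) (Complex.I • φ + ∑ k ∈ univ.erase j, ζ (b j - b k) • t k
        - ∑ k, ζ (b j - a k + ω) • s k) := by
  rw [cross3_eq_crossProduct, map_sub, map_add, cross3_sum_erase_smul, ← map_add, ← map_sub]
  simp only [poleTorque, mergedCharge, mergedPole, mergedSpin, Fintype.sum_sum_type, Sum.elim_inl,
    Sum.elim_inr, Pi.one_apply, Pi.neg_apply, hζ, sub_sub_sub_cancel_right, smul_neg,
    sum_neg_distrib, LinearMap.neg_apply, map_sub, map_add, map_neg, neg_smul, one_smul]
  abel

lemma backgroundRate_merged [DecidableEq ι] [DecidableEq κ] :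
    backgroundRate f mergedCharge (mergedPole ω a b) (mergedSpin s t)
      = (Complex.I / 2) • ∑ j, ∑ k ∈ univ.erase j, deriv f (a j - a k) • cross3 (s j) (s k)
        - (Complex.I / 2) • ∑ j, ∑ k ∈ univ.erase j,
          deriv f (b j - b k) • cross3 (t j) (t k) := by
  simp only [sum_erase_smul_cross3]
  simp only [backgroundRate, mergedCharge, mergedPole, mergedSpin, Fintype.sum_sum_type,
    Sum.elim_inl, Sum.elim_inr, Pi.one_apply, Pi.neg_apply, ← two_mul, mul_smul, ← smul_sum,
    add_neg_cancel, neg_add_cancel, zero_smul, neg_zero, add_zero, zero_add, mul_neg, mul_one,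
    neg_smul, smul_neg, map_neg, LinearMap.neg_apply, sub_sub_sub_cancel_right, sum_neg_distrib]
  module

lemma spinPoleEnergy_merged [DecidableEq ι] [DecidableEq κ] (hf : f.Even) :
    spinPoleEnergy f φ (mergedPole ω a b) (mergedSpin s t) = twoSpeciesEnergy f ω φ a s b t := by
  have hcross : ∀ j k, t k ⬝ᵥ s j * f (b k - ω - a j) = s j ⬝ᵥ t k * f (a j - b k + ω) :=
    fun j k ↦ by rw [dotProduct_comm, ← hf]; congr 2; ring
  have hshift : ∀ j k, a j - (b k - ω) = a j - b k + ω := fun _ _ ↦ (sub_add ..).symm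
  simp only [spinPoleEnergy, twoSpeciesEnergy, sum_erase_eq_sub (mem_univ _), mergedPole,
    mergedSpin, dot3_eq_dotProduct, hcross, hshift, Fintype.sum_sum_type, Sum.elim_inl,
    Sum.elim_inr, Pi.neg_apply, neg_dotProduct, dotProduct_neg, neg_neg, neg_mul,
    sub_sub_sub_cancel_right, sum_neg_distrib, sum_add_distrib, sum_sub_distrib, sub_self]
  rw [Finset.sum_comm (f := fun k j ↦ s j ⬝ᵥ t k * _)]
  ring

end Merged

namespace IsTwoSpeciesFlow

variable [DecidableEq ι] [DecidableEq κ] {Λ : Set ℂ} {ζ p f : ℂ → ℂ} {ω : ℂ} {J : Set ℝ}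
  {φ : ℝ → Fin 3 → ℂ} {a adot : ι → ℝ → ℂ} {s : ι → ℝ → Fin 3 → ℂ} {b bdot : κ → ℝ → ℂ}
  {t : κ → ℝ → Fin 3 → ℂ}

lemma mergedPole_sub_notMem (hflow : IsTwoSpeciesFlow Λ ζ p f ω J φ a s b t adot bdot)
    (hΛ : ∀ z ∈ Λ, -z ∈ Λ) {τ : ℝ} (hτ : τ ∈ J) :
    ∀ j k, j ≠ k → mergedPole ω (a · τ) (b · τ) j - mergedPole ω (a · τ) (b · τ) k ∉ Λ := by
  rintro (j | j) (k | k) hjk <;> simp only [mergedPole, Sum.elim_inl, Sum.elim_inr]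
  · exact hflow.a_sub_a_notMem τ hτ j k (ne_of_apply_ne _ hjk)
  · rw [← sub_add]
    exact hflow.a_sub_b_notMem τ hτ j k
  · intro h
    refine hflow.a_sub_b_notMem τ hτ k j ?_
    convert hΛ _ h using 1
    ring
  · rw [sub_sub_sub_cancel_right]
    exact hflow.b_sub_b_notMem τ hτ j k (ne_of_apply_ne _ hjk)

lemma isSpinPoleFlow_merged (hflow : IsTwoSpeciesFlow Λ ζ p f ω J φ a s b t adot bdot)
    (hΛ : ∀ z ∈ Λ, -z ∈ Λ) (hζ : ∀ z ∉ Λ, ζ (z + 2 * ω) = ζ z) :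
    IsSpinPoleFlow Λ ζ p f mergedCharge J φ (fun i τ ↦ mergedPole ω (a · τ) (b · τ) i)
      (fun i τ ↦ mergedSpin (s · τ) (t · τ) i) (Sum.elim adot bdot) where
  hasDerivWithinAt_pole := by
    rintro (j | j) τ hτ
    · exact hflow.hasDerivWithinAt_a j τ hτ
    · exact (hflow.hasDerivWithinAt_b j τ hτ).sub_const ω
  sub_notMem τ hτ := hflow.mergedPole_sub_notMem hΛ hτ
  hasDerivWithinAt_spin := by
    rintro (j | j) τ hτ
    · rw [spinRate_merged_inl]
      exact hflow.hasDerivWithinAt_s j τ hτ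
    · rw [spinRate_merged_inr]
      exact (hflow.hasDerivWithinAt_t j τ hτ).neg
  velocity_smul := by
    rintro (j | j) τ hτ
    · rw [poleTorque_merged_inl]
      exact hflow.adot_smul j τ hτ
    · rw [poleTorque_merged_inr fun k ↦ ?_, ← hflow.bdot_smul j τ hτ]
      · exact smul_neg _ _
      · have hnotMem := hflow.mergedPole_sub_notMem hΛ hτ (.inr j) (.inl k) nofun
        simp only [mergedPole, Sum.elim_inl, Sum.elim_inr] at hnotMem
        rw [← hζ _ hnotMem]
        congr 1
        ring
  hasDerivWithinAt_background τ hτ := by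
    rw [backgroundRate_merged]
    exact hflow.hasDerivWithinAt_background τ hτ

end IsTwoSpeciesFlow

theorem R_conserved_general [DecidableEq ι] [DecidableEq κ] {Λ : Set ℂ} {ζ p f : ℂ → ℂ} {ω : ℂ}
    {J : Set ℝ} {φ : ℝ → Fin 3 → ℂ} {a adot : ι → ℝ → ℂ} {s : ι → ℝ → Fin 3 → ℂ}
    {b bdot : κ → ℝ → ℂ} {t : κ → ℝ → Fin 3 → ℂ} (hI : IsSpinPoleInteraction Λ ζ p f)
    (hζ : ∀ z ∉ Λ, ζ (z + 2 * ω) = ζ z)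
    (hflow : IsTwoSpeciesFlow Λ ζ p f ω J φ a s b t adot bdot) (hJ : Convex ℝ J) {τ₀ : ℝ}
    (h₀ : τ₀ ∈ J) (hst : ∑ j, s j τ₀ - ∑ j, t j τ₀ = 0) :
    ∀ τ₁ ∈ J, ∀ τ₂ ∈ J,
      twoSpeciesEnergy f ω (φ τ₁) (a · τ₁) (s · τ₁) (b · τ₁) (t · τ₁)
        = twoSpeciesEnergy f ω (φ τ₂) (a · τ₂) (s · τ₂) (b · τ₂) (t · τ₂) := by
  intro τ₁ h₁ τ₂ h₂
  have hS : ∑ i, mergedSpin (s · τ₀) (t · τ₀) i = 0 := by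
    simpa [mergedSpin, ← sub_eq_add_neg] using hst
  have h := (hflow.isSpinPoleFlow_merged hI.neg_mem hζ).energy_eq hI hJ h₀ hS h₁ h₂
  rwa [spinPoleEnergy_merged hI.even_f, spinPoleEnergy_merged hI.even_f] at h

end TwoSpecies

section RectangularLattice

/-- The pair of periods `2ℓ`, `2iδ` generating `Lambda ℓ δ`. -/
def rectangularPeriodPair {ℓ δ : ℝ} (hℓ : 0 < ℓ) (hδ : 0 < δ) : PeriodPair where
  ω₁ := 2 * (ℓ : ℂ)
  ω₂ := 2 * ((δ : ℂ) * Complex.I)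
  indep := by
    rw [LinearIndependent.pair_iff]
    intro u v h
    have hre := congrArg Complex.re h
    have him := congrArg Complex.im h
    simp only [real_smul, add_re, mul_re, ofReal_re, re_ofNat, im_ofNat, ofReal_im, I_re, I_im,
      mul_im, add_im, zero_re, zero_im] at hre him
    simpa [hℓ.ne', hδ.ne'] using And.intro hre him

variable {ℓ δ : ℝ} (hℓ : 0 < ℓ) (hδ : 0 < δ)

lemma lattice_rectangularPeriodPair :
    ((rectangularPeriodPair hℓ hδ).lattice : Set ℂ) = Lambda ℓ δ := by
  ext z
  simp only [SetLike.mem_coe, PeriodPair.mem_lattice, Lambda, Set.mem_ofPred_eq,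
    rectangularPeriodPair]
  refine exists₂_congr fun m n ↦ ⟨fun h ↦ ?_, fun h ↦ ?_⟩
  · rw [← h]; ring
  · rw [h]; ring

lemma tsum_latticePts (g : ℂ → ℂ) :
    ∑' l : latticePts ℓ δ, g l
      = ∑' l : (rectangularPeriodPair hℓ hδ).lattice, if l.1 = 0 then 0 else g l := by
  rw [_root_.tsum_subtype, latticePts, ← lattice_rectangularPeriodPair hℓ hδ]
  refine Eq.trans (tsum_congr fun z ↦ ?_) (_root_.tsum_subtype
    ((rectangularPeriodPair hℓ hδ).lattice : Set ℂ) fun z ↦ if z = 0 then 0 else g z).symm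
  classical
  rw [Set.indicator_apply, Set.indicator_apply]
  grind

lemma wP_eq_weierstrassP : wP ℓ δ = (rectangularPeriodPair hℓ hδ).weierstrassP := by
  ext z
  rw [weierstrassP_eq_one_div_sq_add, wP, PeriodPair.weierstrassPExcept,
    tsum_latticePts hℓ hδ fun ω ↦ 1 / (z - ω) ^ 2 - 1 / ω ^ 2]

lemma wZeta_eq_weierstrassZeta : wZeta ℓ δ = weierstrassZeta (rectangularPeriodPair hℓ hδ) := by
  ext z
  rw [wZeta, tsum_latticePts hℓ hδ fun ω ↦ 1 / (z - ω) + 1 / ω + z / ω ^ 2]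
  rfl

lemma zeta2_eq_modifiedZeta :
    zeta2 ℓ δ = modifiedZeta (rectangularPeriodPair hℓ hδ)
      (wZeta ℓ δ (δ * Complex.I) / (δ * Complex.I)) := by
  ext z
  rw [zeta2, modifiedZeta, wZeta_eq_weierstrassZeta hℓ hδ]

lemma wp2_eq_modifiedP :
    wp2 ℓ δ = modifiedP (rectangularPeriodPair hℓ hδ)
      (wZeta ℓ δ (δ * Complex.I) / (δ * Complex.I)) := by
  ext z
  rw [wp2, modifiedP, wP_eq_weierstrassP hℓ hδ]

lemma f2_eq_modifiedF :
    f2 ℓ δ = modifiedF (rectangularPeriodPair hℓ hδ)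
      (wZeta ℓ δ (δ * Complex.I) / (δ * Complex.I)) := by
  ext z
  rw [f2, modifiedF, zeta2_eq_modifiedZeta hℓ hδ, wp2_eq_modifiedP hℓ hδ]

include hℓ hδ

lemma isSpinPoleInteraction_rectangular :
    IsSpinPoleInteraction (Lambda ℓ δ) (zeta2 ℓ δ) (wp2 ℓ δ) (f2 ℓ δ) := by
  have hI := isSpinPoleInteraction_modified (rectangularPeriodPair hℓ hδ)
    (wZeta ℓ δ (δ * Complex.I) / (δ * Complex.I))
  rwa [← zeta2_eq_modifiedZeta hℓ hδ, ← wp2_eq_modifiedP hℓ hδ, ← f2_eq_modifiedF hℓ hδ,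
    lattice_rectangularPeriodPair hℓ hδ] at hI

lemma zeta2_add_two_mul {z : ℂ} (hz : z ∉ Lambda ℓ δ) :
    zeta2 ℓ δ (z + 2 * (δ * Complex.I)) = zeta2 ℓ δ z := by
  have hhalf := (rectangularPeriodPair hℓ hδ).ω₂_div_two_notMem_lattice
  rw [rectangularPeriodPair, mul_div_cancel_left₀ _ two_ne_zero] at hhalf
  rw [zeta2_eq_modifiedZeta hℓ hδ, wZeta_eq_weierstrassZeta hℓ hδ]
  rw [← lattice_rectangularPeriodPair hℓ hδ] at hz
  exact modifiedZeta_add_two_mul _ (rectangularPeriodPair hℓ hδ).ω₂_mem_lattice hhalf hz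

end RectangularLattice

/-- Conservation of the quantity `R` under the first-order system. -/
theorem R_conserved
    (ℓ δ : ℝ) (hℓ : 0 < ℓ) (hδ : 0 < δ)
    (N M : ℕ) (hN : 1 ≤ N) (hM : 1 ≤ M)
    (T : ℝ) (hT : 0 < T)
    (φ : ℝ → Fin 3 → ℂ)
    (a : Fin N → ℝ → ℂ) (s : Fin N → ℝ → Fin 3 → ℂ)
    (b : Fin M → ℝ → ℂ) (t : Fin M → ℝ → Fin 3 → ℂ)
    (adot : Fin N → ℝ → ℂ) (bdot : Fin M → ℝ → ℂ)
    -- differentiability of the positions, with derivatives `adot`, `bdot`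
    (ha : ∀ j, ∀ τ ∈ Set.Ico (0:ℝ) T, HasDerivWithinAt (a j) (adot j τ) (Set.Ico (0:ℝ) T) τ)
    (hb : ∀ j, ∀ τ ∈ Set.Ico (0:ℝ) T, HasDerivWithinAt (b j) (bdot j τ) (Set.Ico (0:ℝ) T) τ)
    -- nondegeneracy: differences of poles avoid the lattice
    (haa : ∀ τ ∈ Set.Ico (0:ℝ) T, ∀ j k : Fin N, j ≠ k → a j τ - a k τ ∉ Lambda ℓ δ)
    (hbb : ∀ τ ∈ Set.Ico (0:ℝ) T, ∀ j k : Fin M, j ≠ k → b j τ - b k τ ∉ Lambda ℓ δ)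
    (hab : ∀ τ ∈ Set.Ico (0:ℝ) T, ∀ (j : Fin N) (k : Fin M),
      a j τ - b k τ + (δ : ℂ) * Complex.I ∉ Lambda ℓ δ)
    -- the first-order system: spin equations
    (hsdot : ∀ j, ∀ τ ∈ Set.Ico (0:ℝ) T, HasDerivWithinAt (s j)
      ((-2 : ℂ) • ∑ k ∈ Finset.univ.erase j, wp2 ℓ δ (a j τ - a k τ) • cross3 (s j τ) (s k τ))
      (Set.Ico (0:ℝ) T) τ)
    (htdot : ∀ j, ∀ τ ∈ Set.Ico (0:ℝ) T, HasDerivWithinAt (t j)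
      ((-2 : ℂ) • ∑ k ∈ Finset.univ.erase j, wp2 ℓ δ (b j τ - b k τ) • cross3 (t j τ) (t k τ))
      (Set.Ico (0:ℝ) T) τ)
    -- the first-order system: pole equations
    (hadot : ∀ j, ∀ τ ∈ Set.Ico (0:ℝ) T,
      adot j τ • s j τ = -cross3 (s j τ)
        (Complex.I • φ τ - ∑ k ∈ Finset.univ.erase j, zeta2 ℓ δ (a j τ - a k τ) • s k τ
          + ∑ k : Fin M, zeta2 ℓ δ (a j τ - b k τ + (δ : ℂ) * Complex.I) • t k τ))
    (hbdot : ∀ j, ∀ τ ∈ Set.Ico (0:ℝ) T,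
      bdot j τ • t j τ = cross3 (t j τ)
        (Complex.I • φ τ + ∑ k ∈ Finset.univ.erase j, zeta2 ℓ δ (b j τ - b k τ) • t k τ
          - ∑ k : Fin N, zeta2 ℓ δ (b j τ - a k τ + (δ : ℂ) * Complex.I) • s k τ))
    -- the first-order system: background equation
    (hφdot : ∀ τ ∈ Set.Ico (0:ℝ) T, HasDerivWithinAt φ
      ((Complex.I / 2) • ∑ j : Fin N, ∑ k ∈ Finset.univ.erase j,
          deriv (f2 ℓ δ) (a j τ - a k τ) • cross3 (s j τ) (s k τ)
        - (Complex.I / 2) • ∑ j : Fin M, ∑ k ∈ Finset.univ.erase j,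
          deriv (f2 ℓ δ) (b j τ - b k τ) • cross3 (t j τ) (t k τ))
      (Set.Ico (0:ℝ) T) τ)
    (hC3 : (∑ j : Fin N, s j 0) - ∑ j : Fin M, t j 0 = 0)
    (hC1s : ∀ j, dot3 (s j 0) (s j 0) = 0)
    (hC1t : ∀ j, dot3 (t j 0) (t j 0) = 0) :
    ∀ τ₁ ∈ Set.Ico (0:ℝ) T, ∀ τ₂ ∈ Set.Ico (0:ℝ) T,
      (dot3 (φ τ₁) (φ τ₁)
        - (1/2 : ℂ) * ∑ j : Fin N, ∑ k ∈ Finset.univ.erase j,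
            dot3 (s j τ₁) (s k τ₁) * f2 ℓ δ (a j τ₁ - a k τ₁)
        - (1/2 : ℂ) * ∑ j : Fin M, ∑ k ∈ Finset.univ.erase j,
            dot3 (t j τ₁) (t k τ₁) * f2 ℓ δ (b j τ₁ - b k τ₁)
        + ∑ j : Fin N, ∑ k : Fin M,
            dot3 (s j τ₁) (t k τ₁) * f2 ℓ δ (a j τ₁ - b k τ₁ + (δ : ℂ) * Complex.I))
      = (dot3 (φ τ₂) (φ τ₂)
        - (1/2 : ℂ) * ∑ j : Fin N, ∑ k ∈ Finset.univ.erase j,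
            dot3 (s j τ₂) (s k τ₂) * f2 ℓ δ (a j τ₂ - a k τ₂)
        - (1/2 : ℂ) * ∑ j : Fin M, ∑ k ∈ Finset.univ.erase j,
            dot3 (t j τ₂) (t k τ₂) * f2 ℓ δ (b j τ₂ - b k τ₂)
        + ∑ j : Fin N, ∑ k : Fin M,
            dot3 (s j τ₂) (t k τ₂) * f2 ℓ δ (a j τ₂ - b k τ₂ + (δ : ℂ) * Complex.I)) := by
  exact R_conserved_general (isSpinPoleInteraction_rectangular hℓ hδ)
    (fun _ ↦ zeta2_add_two_mul hℓ hδ)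
    ⟨ha, hb, haa, hbb, hab, hsdot, htdot, hadot, hbdot, hφdot⟩ (convex_Ico 0 T) ⟨le_rfl, hT⟩ hC3

end
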